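/- Let S be a d×d parity indicative symmetric matrix over ℤ₂ with diag(S) = 0 (every diagonal entry equals 0) and rank(S) = d − 1. If F = (f_1, …, f_{d+1}) is a (d+1)-element frame for ℤ₂^d with S = Θ_F Θ_F*, then (f_i, f_i) = 1 for every 1 ≤ i ≤ d+1 (i.e., every frame vector is odd). -/

import Mathlib

/-!
Write `T` for the synthesis operator, so `S = T Tᵀ`. Over `ℤ₂` every `x` satisfies `x * x = x`, hence
`diag S = 0` says that `T 𝟙 = 0`, and parity indicativity then says that `S 𝟙 = T (Tᵀ 𝟙) = 0`.
As `T` maps a space of dimension `d + 1` onto one of dimension `d`, its kernel is a line, namely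
`{0, 𝟙}`. The coordinates of `Tᵀ 𝟙` are the values `(f_j, f_j)`. This vector lies in the kernel of `T`
and is nonzero, because the functional summing all coordinates cannot vanish on a spanning set. So
`Tᵀ 𝟙 = 𝟙`. The rank hypothesis enters only through `0 < d`.
-/

open Matrix

/-- The synthesis operator of a family of `K` vectors in `ℤ₂^d`:
the `d × K` matrix whose `j`-th column is `F j`. -/
def synthesis {d K : ℕ} (F : Fin K → Fin d → ZMod 2) :
    Matrix (Fin d) (Fin K) (ZMod 2) :=
  Matrix.of fun i j => F j i

/-- A family of vectors in `ℤ₂^d` is a (binary) frame if it spans `ℤ₂^d`. -/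
def IsFrame {d K : ℕ} (F : Fin K → Fin d → ZMod 2) : Prop :=
  Submodule.span (ZMod 2) (Set.range F) = ⊤

/-- The dot product on `ℤ₂^d`. -/
def dotp {d : ℕ} (a b : Fin d → ZMod 2) : ZMod 2 := ∑ n, a n * b n

/-- A vector over `ℤ₂` is odd if its dot product with itself is `1`. -/
def IsOddVec {d : ℕ} (v : Fin d → ZMod 2) : Prop := dotp v v = 1

/-- A `d × d` symmetric matrix `S` over `ℤ₂` is parity indicative if, for every `i`,
the diagonal entry `S i i = 1` if and only if the `i`-th row of `S` is odd. -/
def ParityIndicative {d : ℕ} (S : Matrix (Fin d) (Fin d) (ZMod 2)) : Prop :=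
  ∀ i, S i i = 1 ↔ IsOddVec (S i)

/-- `‖α‖₀`, the number of nonzero entries of a vector `α ∈ ℤ₂^K`. -/
def zeroNorm {K : ℕ} (α : Fin K → ZMod 2) : ℕ :=
  (Finset.univ.filter fun i => α i ≠ 0).card

theorem zmod_two_mul_self (x : ZMod 2) : x * x = x := by
  revert x; decide

theorem zmod_two_eq_zero_of_ne_one {x : ZMod 2} (h : x ≠ 1) : x = 0 := by
  revert x; decide

theorem dotp_self {d : ℕ} (v : Fin d → ZMod 2) : dotp v v = ∑ n, v n := by
  simp [dotp, zmod_two_mul_self]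

/-- The synthesis operator of a frame of `d + 1` vectors has a one-dimensional kernel. -/
theorem finrank_ker_synthesis {d : ℕ} {F : Fin (d + 1) → Fin d → ZMod 2} (hF : IsFrame F) :
    Module.finrank (ZMod 2) (LinearMap.ker (synthesis F).mulVecLin) = 1 := by
  have hr : LinearMap.range (synthesis F).mulVecLin = ⊤ := by
    rw [Matrix.range_mulVecLin]
    exact hF
  have h := LinearMap.finrank_range_add_finrank_ker (synthesis F).mulVecLin
  rw [hr, finrank_top, Module.finrank_fin_fun, Module.finrank_fin_fun] at h
  omega

/-- If `d > 0`, then some vector of a frame is odd, since the sum of coordinates is a nonzero functional. -/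
theorem IsFrame.parity_ne_zero {d K : ℕ} {F : Fin K → Fin d → ZMod 2} (hF : IsFrame F)
    (hd : 0 < d) : (fun j => dotp (F j) (F j)) ≠ 0 := by
  intro h
  let φ : (Fin d → ZMod 2) →ₗ[ZMod 2] ZMod 2 := ∑ n, LinearMap.proj n
  have hφ : ∀ v, φ v = ∑ n, v n := fun v => by simp [φ]
  have hzero : φ = 0 := by
    refine LinearMap.ext_on_range (v := F) hF fun j => ?_
    rw [hφ, ← dotp_self]
    exact congrFun h j
  have h1 : φ (Pi.single ⟨0, hd⟩ 1) = 1 := by simp [hφ]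
  rw [hzero] at h1
  simp at h1

theorem stmt_16 {d : ℕ} (S : Matrix (Fin d) (Fin d) (ZMod 2))
    (hsymm : S.IsSymm) (hpi : ParityIndicative S)
    (hdiag : S.diag = 0) (hrank : S.rank + 1 = d)
    (F : Fin (d + 1) → Fin d → ZMod 2) (hF : IsFrame F)
    (hS : S = synthesis F * (synthesis F)ᵀ) :
    ∀ i, dotp (F i) (F i) = 1 := by
  have hone : (1 : Fin (d + 1) → ZMod 2) ∈ LinearMap.ker (synthesis F).mulVecLin := by
    rw [LinearMap.mem_ker]
    ext i
    have h := congrFun hdiag i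
    rw [hS] at h
    simpa [Matrix.mul_apply, synthesis, zmod_two_mul_self, Matrix.mulVec, dotProduct] using h
  have hpar : (fun j => dotp (F j) (F j)) ∈ LinearMap.ker (synthesis F).mulVecLin := by
    -- The parity vector is `Tᵀ 𝟙`.
    have hT : (fun j => dotp (F j) (F j)) = (synthesis F)ᵀ *ᵥ 1 := by
      ext j
      simp [dotp_self, synthesis, Matrix.mulVec, dotProduct]
    rw [LinearMap.mem_ker, hT, Matrix.mulVecLin_apply, Matrix.mulVec_mulVec, ← hS]
    ext i
    have hi : S i i ≠ 1 := by
      have h : S i i = 0 := congrFun hdiag i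
      simp [h]
    have hrow : dotp (S i) (S i) = 0 :=
      zmod_two_eq_zero_of_ne_one fun h => hi ((hpi i).2 h)
    simpa [dotp_self, Matrix.mulVec, dotProduct] using hrow
  have hne : (⟨1, hone⟩ : LinearMap.ker (synthesis F).mulVecLin) ≠ 0 := by
    intro h
    exact one_ne_zero (congrArg Subtype.val h)
  obtain ⟨c, hc⟩ :=
    (finrank_eq_one_iff_of_nonzero' _ hne).1 (finrank_ker_synthesis hF) ⟨_, hpar⟩
  have hc' : c • (1 : Fin (d + 1) → ZMod 2) = fun j => dotp (F j) (F j) :=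
    congrArg Subtype.val hc
  have hc1 : c = 1 := by
    by_contra h
    rw [zmod_two_eq_zero_of_ne_one h, zero_smul] at hc'
    exact hF.parity_ne_zero (by omega) hc'.symm
  intro i
  simpa [hc1] using (congrFun hc' i).symm
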